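/- Let λ ∈ ℝ and define H_λ(x) = (24 − λx) ln x + [(9λ − 172)x + 12λ − 256] ln(x+1) + 4[(37 − 2λ)x − 3λ + 61] ln(x+2) and G_λ(x) = ln Γ(x) + x + 1/(12(1+x)²) + (λ − 48)/(48(1+x)) + H_λ(x)/24. Then G_λ is completely monotonic on (0,∞) if and only if λ ≤ 0. -/

import Mathlib

/-- A function is completely monotonic on a set `s` if it has derivatives of all
orders there and `(-1)^n f^(n)(x) ≥ 0` for all `x ∈ s` and all `n ≥ 0`. -/
def CompletelyMonotonicOn (f : ℝ → ℝ) (s : Set ℝ) : Prop :=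
  ContDiffOn ℝ (⊤ : ℕ∞) f s ∧
    ∀ n : ℕ, ∀ x ∈ s, 0 ≤ (-1 : ℝ) ^ n * iteratedDerivWithin n f s x

/-- `H_λ(x)` as in the paper. -/
noncomputable def H (lam x : ℝ) : ℝ :=
  (24 - lam * x) * Real.log x +
    ((9 * lam - 172) * x + 12 * lam - 256) * Real.log (x + 1) +
    4 * ((37 - 2 * lam) * x - 3 * lam + 61) * Real.log (x + 2)

/-- `G_λ(x)` as in the paper. -/
noncomputable def G (lam x : ℝ) : ℝ :=
  Real.log (Real.Gamma x) + x + 1 / (12 * (1 + x) ^ 2) +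
    (lam - 48) / (48 * (1 + x)) + H lam x / 24

open Filter Topology in
/-- nonnegativity from derivative -/
lemma nonneg_of_deriv_nonneg (f f' : ℝ → ℝ) (hf : ∀ t, HasDerivAt f (f' t) t) (h0 : 0 ≤ f 0)
    (h' : ∀ t, 0 ≤ t → 0 ≤ f' t) (t : ℝ) (ht : 0 ≤ t) : 0 ≤ f t := by
  have hm : MonotoneOn f (Set.Ici 0) := by
    apply monotoneOn_of_hasDerivWithinAt_nonneg (convex_Ici 0) (f' := f')
    · intro x _; exact (hf x).continuousAt.continuousWithinAt
    · intro x _; exact (hf x).hasDerivWithinAt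
    · intro x hx; rw [interior_Ici] at hx; exact h' x (le_of_lt hx)
  exact h0.trans (hm Set.self_mem_Ici ht ht)

/-- exponential polynomials `e^t a(t) + b(t)` with cubic `a`, `b` -/
noncomputable def ep (a0 a1 a2 a3 b0 b1 b2 b3 t : ℝ) : ℝ :=
  Real.exp t * (a0 + a1 * t + a2 * t ^ 2 + a3 * t ^ 3) + (b0 + b1 * t + b2 * t ^ 2 + b3 * t ^ 3)

lemma poly3_deriv (a0 a1 a2 a3 t : ℝ) :
    HasDerivAt (fun t : ℝ => a0 + a1 * t + a2 * t ^ 2 + a3 * t ^ 3)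
      (a1 + 2 * a2 * t + 3 * a3 * t ^ 2) t := by
  have := (((hasDerivAt_id t).const_mul a1).const_add a0).add
    (((hasDerivAt_id t).pow 2).const_mul a2) |>.add (((hasDerivAt_id t).pow 3).const_mul a3)
  refine this.congr_deriv ?_
  simp; ring

lemma ep_deriv (a0 a1 a2 a3 b0 b1 b2 b3 t : ℝ) :
    HasDerivAt (ep a0 a1 a2 a3 b0 b1 b2 b3)
      (ep (a0 + a1) (a1 + 2 * a2) (a2 + 3 * a3) a3 b1 (2 * b2) (3 * b3) 0 t) t := by
  have := ((Real.hasDerivAt_exp t).mul (poly3_deriv a0 a1 a2 a3 t)).add (poly3_deriv b0 b1 b2 b3 t)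
  refine this.congr_deriv ?_
  unfold ep; ring

lemma ep_step (a0 a1 a2 a3 b0 b1 b2 b3 : ℝ) (h0 : 0 ≤ a0 + b0)
    (h : ∀ t, 0 ≤ t → 0 ≤ ep (a0 + a1) (a1 + 2 * a2) (a2 + 3 * a3) a3 b1 (2 * b2) (3 * b3) 0 t) :
    ∀ t, 0 ≤ t → 0 ≤ ep a0 a1 a2 a3 b0 b1 b2 b3 t :=
  nonneg_of_deriv_nonneg _ _ (ep_deriv a0 a1 a2 a3 b0 b1 b2 b3) (by simpa [ep] using h0) h

/-- exponential polynomials `e^{2t} a(t) + e^t b(t) + c0 + c1 t` -/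
noncomputable def ep2 (a0 a1 a2 a3 b0 b1 b2 b3 c0 c1 t : ℝ) : ℝ :=
  Real.exp t * ep a0 a1 a2 a3 b0 b1 b2 b3 t + (c0 + c1 * t)

lemma ep2_deriv (a0 a1 a2 a3 b0 b1 b2 b3 c0 c1 t : ℝ) :
    HasDerivAt (ep2 a0 a1 a2 a3 b0 b1 b2 b3 c0 c1)
      (ep2 (2 * a0 + a1) (2 * a1 + 2 * a2) (2 * a2 + 3 * a3) (2 * a3)
        (b0 + b1) (b1 + 2 * b2) (b2 + 3 * b3) b3 c1 0 t) t := by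
  have := ((Real.hasDerivAt_exp t).mul (ep_deriv a0 a1 a2 a3 b0 b1 b2 b3 t)).add
    (((hasDerivAt_id t).const_mul c1).const_add c0)
  refine this.congr_deriv ?_
  unfold ep2 ep; ring

lemma ep2_step (a0 a1 a2 a3 b0 b1 b2 b3 c0 c1 : ℝ) (h0 : 0 ≤ a0 + b0 + c0)
    (h : ∀ t, 0 ≤ t → 0 ≤ ep2 (2 * a0 + a1) (2 * a1 + 2 * a2) (2 * a2 + 3 * a3) (2 * a3)
        (b0 + b1) (b1 + 2 * b2) (b2 + 3 * b3) b3 c1 0 t) :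
    ∀ t, 0 ≤ t → 0 ≤ ep2 a0 a1 a2 a3 b0 b1 b2 b3 c0 c1 t :=
  nonneg_of_deriv_nonneg _ _ (ep2_deriv a0 a1 a2 a3 b0 b1 b2 b3 c0 c1)
    (by simpa [ep2, ep] using h0) h

lemma ep2_of_ep (a0 a1 a2 a3 b0 b1 b2 b3 : ℝ)
    (h : ∀ t, 0 ≤ t → 0 ≤ ep a0 a1 a2 a3 b0 b1 b2 b3 t) :
    ∀ t, 0 ≤ t → 0 ≤ ep2 a0 a1 a2 a3 b0 b1 b2 b3 0 0 t := by
  intro t ht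
  have := mul_nonneg (Real.exp_pos t).le (h t ht)
  simpa [ep2] using this

lemma psi_nonneg (t : ℝ) (ht : 0 ≤ t) :
    0 ≤ ep2 (-86) 54 (-12) 1 160 (-16) 12 (-1) (-74) (-26) t := by
  revert t
  iterate 4 (apply ep2_step; · norm_num)
  norm_num
  apply ep2_of_ep
  iterate 4 (apply ep_step; · norm_num)
  norm_num
  intro t ht
  unfold ep
  have := Real.exp_pos t
  simp only [zero_mul, add_zero]
  positivity

lemma kappa_nonneg (t : ℝ) (ht : 0 ≤ t) :
    0 ≤ ep2 1 0 0 0 (-9) 3 (-1/2) 0 8 4 t := by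
  revert t
  iterate 2 (apply ep2_step; · norm_num)
  norm_num
  apply ep2_of_ep
  iterate 3 (apply ep_step; · norm_num)
  norm_num
  intro t ht
  unfold ep
  have := Real.exp_pos t
  simp only [zero_mul, add_zero]
  positivity

/-- `q p c = p! / c^(p+1) = ∫ t^p e^{-ct}`. -/
noncomputable def q (p : ℕ) (c : ℝ) : ℝ := p.factorial / c ^ (p + 1)

lemma q_deriv (p : ℕ) (c a : ℝ) (hc : 0 < c + a) :
    HasDerivAt (fun x => q p (x + a)) (-q (p + 1) (c + a)) c := by
  have h := (((hasDerivAt_id c).add_const a).pow (p + 1)).inv (by simp; positivity)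
  have h2 := h.const_mul (p.factorial : ℝ)
  unfold q
  simp only [div_eq_mul_inv]
  refine h2.congr_deriv ?_
  simp [Nat.factorial_succ]
  field_simp
  ring

/-- `f` is integrable on the half line with integral `v`. -/
def HasLap (f : ℝ → ℝ) (v : ℝ) : Prop :=
  MeasureTheory.IntegrableOn f (Set.Ioi 0) ∧ ∫ t in Set.Ioi 0, f t = v

lemma HasLap.add {f g : ℝ → ℝ} {v w : ℝ} (hf : HasLap f v) (hg : HasLap g w) :
    HasLap (fun t => f t + g t) (v + w) :=
  ⟨MeasureTheory.Integrable.add hf.1 hg.1, by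
    rw [MeasureTheory.integral_add hf.1 hg.1, hf.2, hg.2]⟩

lemma HasLap.mul {f : ℝ → ℝ} {v : ℝ} (c : ℝ) (hf : HasLap f v) :
    HasLap (fun t => c * f t) (c * v) :=
  ⟨MeasureTheory.Integrable.const_mul hf.1 c, by
    rw [MeasureTheory.integral_const_mul, hf.2]⟩

lemma HasLap.nonneg {f : ℝ → ℝ} {v : ℝ} (hf : HasLap f v) (h : ∀ t, 0 < t → 0 ≤ f t) : 0 ≤ v := by
  rw [← hf.2]
  exact MeasureTheory.setIntegral_nonneg measurableSet_Ioi (fun t ht => h t ht)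

lemma hasLap_q (p : ℕ) (c : ℝ) (hc : 0 < c) :
    HasLap (fun t => t ^ p * Real.exp (-(c * t))) (q p c) := by
  have e : ∫ t in Set.Ioi (0:ℝ), t ^ p * Real.exp (-(c * t)) = q p c := by
    have := Real.integral_rpow_mul_exp_neg_mul_Ioi (a := p + 1) (r := c) (by positivity) hc
    simp only [add_sub_cancel_right, Real.rpow_natCast] at this
    rw [this, Real.Gamma_nat_eq_factorial, q]
    have : ((p : ℝ) + 1) = ((p + 1 : ℕ) : ℝ) := by push_cast; ring
    rw [this, Real.rpow_natCast, one_div, inv_pow]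
    field_simp
  refine ⟨?_, e⟩
  by_contra h
  rw [MeasureTheory.integral_undef h] at e
  have : 0 < q p c := by unfold q; positivity
  linarith

/-- the part of the second derivative multiplying `-λ/24` -/
noncomputable def K (m : ℕ) (x : ℝ) : ℝ :=
  q m (x + 0) + (-9) * q m (x + 1) + 3 * q (m + 1) (x + 1) + 8 * q m (x + 2) + 4 * q (m + 1) (x + 2)
    + (-1 / 2) * q (m + 2) (x + 1)

/-- rational part at `λ = 0` -/
noncomputable def P (m : ℕ) (x : ℝ) : ℝ :=
  (1 / 12) * q (m + 3) (x + 1) + (-1) * q (m + 2) (x + 1) + (-43 / 6) * q m (x + 1)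
    + (7 / 2) * q (m + 1) (x + 1) + (37 / 6) * q m (x + 2) + (13 / 6) * q (m + 1) (x + 2)

lemma K_nonneg (m : ℕ) (x : ℝ) (hx : 0 < x) : 0 ≤ K m x := by
  have h0 (p : ℕ) := hasLap_q p (x + 0) (by linarith)
  have h1 (p : ℕ) := hasLap_q p (x + 1) (by linarith)
  have h2 (p : ℕ) := hasLap_q p (x + 2) (by linarith)
  have := (((((h0 m).add ((h1 m).mul (-9))).add ((h1 (m+1)).mul 3)).add ((h2 m).mul 8)).add
    ((h2 (m+1)).mul 4)).add ((h1 (m+2)).mul (-1/2))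
  refine this.nonneg ?_
  intro t ht
  have k := mul_nonneg (mul_nonneg (pow_nonneg ht.le m) (Real.exp_pos (-((x + 2) * t))).le)
    (kappa_nonneg t ht.le)
  have e1 : Real.exp (-((x + 1) * t)) = Real.exp (-((x + 2) * t)) * Real.exp t := by
    rw [← Real.exp_add]; ring_nf
  have e0 : Real.exp (-((x + 0) * t)) = Real.exp (-((x + 2) * t)) * Real.exp t * Real.exp t := by
    rw [← Real.exp_add, ← Real.exp_add]; ring_nf
  rw [e0, e1]
  refine k.trans_eq ?_
  unfold ep2 ep
  ring

lemma P_diff_nonneg (m : ℕ) (x : ℝ) (hx : 0 < x) :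
    0 ≤ q (m + 1) (x + 1) + P m x - P m (x + 1) := by
  have h1 (p : ℕ) := hasLap_q p (x + 1) (by linarith)
  have h2 (p : ℕ) := hasLap_q p (x + 2) (by linarith)
  have h2' (p : ℕ) := hasLap_q p (x + 1 + 1) (by linarith)
  have h3 (p : ℕ) := hasLap_q p (x + 1 + 2) (by linarith)
  have a := ((((((h1 (m+3)).mul (1/12)).add ((h1 (m+2)).mul (-1))).add ((h1 m).mul (-43/6))).add
    ((h1 (m+1)).mul (7/2))).add ((h2 m).mul (37/6))).add ((h2 (m+1)).mul (13/6))
  have b := ((((((h2' (m+3)).mul (1/12)).add ((h2' (m+2)).mul (-1))).add ((h2' m).mul (-43/6))).add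
    ((h2' (m+1)).mul (7/2))).add ((h3 m).mul (37/6))).add ((h3 (m+1)).mul (13/6))
  have := ((h1 (m+1)).add a).add (b.mul (-1))
  have key := this.nonneg ?_
  · unfold P; linarith
  intro t ht
  have k := mul_nonneg (mul_nonneg (pow_nonneg ht.le m) (Real.exp_pos (-((x + 1 + 2) * t))).le)
    (psi_nonneg t ht.le)
  have e1 : Real.exp (-((x + 1) * t)) = Real.exp (-((x + 1 + 2) * t)) * Real.exp t * Real.exp t := by
    rw [← Real.exp_add, ← Real.exp_add]; ring_nf
  have e2 : Real.exp (-((x + 2) * t)) = Real.exp (-((x + 1 + 2) * t)) * Real.exp t := by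
    rw [← Real.exp_add]; ring_nf
  have e3 : Real.exp (-((x + 1 + 1) * t)) = Real.exp (-((x + 1 + 2) * t)) * Real.exp t := by
    rw [← Real.exp_add]; ring_nf
  rw [e1, e2, e3]
  have k2 := mul_nonneg (by norm_num : (0:ℝ) ≤ 1/12) k
  refine k2.trans_eq ?_
  unfold ep2 ep
  ring
open Filter Topology

/-- term of the Euler series for `log Γ(x) + log x` -/
noncomputable def u (k : ℕ) (x : ℝ) : ℝ :=
  x * (Real.log (k + 2) - Real.log (k + 1)) - Real.log (x + (k + 1)) + Real.log (k + 1)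

/-- its derivative -/
noncomputable def u1 (k : ℕ) (x : ℝ) : ℝ :=
  (Real.log (k + 2) - Real.log (k + 1)) - q 0 (x + (k + 1))

lemma u_deriv (k : ℕ) (x : ℝ) (hx : 0 < x) : HasDerivAt (u k) (u1 k x) x := by
  have hk : x + ((k : ℝ) + 1) ≠ 0 := by positivity
  have := (((hasDerivAt_id x).mul_const (Real.log (k + 2) - Real.log (k + 1))).sub
    (((hasDerivAt_id x).add_const ((k : ℝ) + 1)).log hk)).add_const (Real.log (k + 1))
  refine this.congr_deriv ?_
  simp [u1, q]

lemma u1_deriv (k : ℕ) (x : ℝ) (hx : 0 < x) :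
    HasDerivAt (u1 k) (q 1 (x + (k + 1))) x := by
  have := (q_deriv 0 x (k + 1) (by positivity)).const_sub (Real.log (k + 2) - Real.log (k + 1))
  refine this.congr_deriv ?_
  simp

lemma summable_q (m : ℕ) : Summable (fun k : ℕ => q (m + 1) ((k : ℝ) + 1)) := by
  unfold q
  have h := (Real.summable_nat_pow_inv (p := m + 2)).2 (by omega)
  have h2 := ((summable_nat_add_iff 1).2 h).mul_left ((m + 1).factorial : ℝ)
  refine h2.congr ?_
  intro k
  push_cast
  rw [div_eq_mul_inv]

lemma q_nonneg (m : ℕ) (c : ℝ) (hc : 0 < c) : 0 ≤ q m c := by unfold q; positivity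

lemma q_anti (m : ℕ) (c d : ℝ) (hc : 0 < c) (h : c ≤ d) : q m d ≤ q m c := by
  unfold q; gcongr

lemma q_norm_le (m k : ℕ) (x : ℝ) (hx : 0 < x) : ‖q m (x + (k + 1))‖ ≤ q m ((k : ℝ) + 1) := by
  rw [Real.norm_of_nonneg (q_nonneg _ _ (by positivity))]
  exact q_anti _ _ _ (by positivity) (by linarith)

lemma summable_q_x (m : ℕ) (x : ℝ) (hx : 0 < x) :
    Summable (fun k : ℕ => q (m + 1) (x + (k + 1))) :=
  Summable.of_norm_bounded (summable_q m) (fun k => q_norm_le _ _ _ hx)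

lemma u1_bound (A : ℝ) (k : ℕ) (x : ℝ) (hx : x ∈ Set.Ioo 0 A) :
    ‖u1 k x‖ ≤ (A + 1) * q 1 ((k : ℝ) + 1) := by
  obtain ⟨h0, hA⟩ := hx
  have hk : (0 : ℝ) ≤ k := Nat.cast_nonneg k
  have e : Real.log (k + 2) - Real.log (k + 1) = Real.log (((k : ℝ) + 2) / (k + 1)) := by
    rw [Real.log_div (by positivity) (by positivity)]
  have up : Real.log (k + 2) - Real.log (k + 1) ≤ 1 / ((k : ℝ) + 1) := by
    rw [e]
    refine (Real.log_le_sub_one_of_pos (by positivity)).trans_eq ?_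
    field_simp; ring
  have lo : 1 / ((k : ℝ) + 2) ≤ Real.log (k + 2) - Real.log (k + 1) := by
    rw [e]
    refine le_trans (le_of_eq ?_) (Real.one_sub_inv_le_log_of_pos (by positivity))
    field_simp; ring
  have hq : q 0 (x + (k + 1)) = 1 / (x + (k + 1)) := by simp [q]
  have hq1 : q 1 ((k : ℝ) + 1) = 1 / ((k : ℝ) + 1) ^ 2 := by simp [q]
  rw [Real.norm_eq_abs, u1, hq, hq1, abs_le]
  have b1 : 1 / ((k : ℝ) + 1) - 1 / (x + (k + 1)) ≤ (A + 1) * (1 / ((k : ℝ) + 1) ^ 2) := by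
    have : 1 / ((k : ℝ) + 1) - 1 / (x + (k + 1)) = x / (((k : ℝ) + 1) * (x + (k + 1))) := by
      field_simp; ring
    rw [this, mul_one_div]
    apply div_le_div₀ <;> nlinarith
  have b2 : 1 / (x + (k + 1)) - 1 / ((k : ℝ) + 2) ≤ (A + 1) * (1 / ((k : ℝ) + 1) ^ 2) := by
    have h1 : 1 / (x + (k + 1)) ≤ 1 / ((k : ℝ) + 1) :=
      one_div_le_one_div_of_le (by positivity) (by linarith)
    have : 1 / ((k : ℝ) + 1) - 1 / ((k : ℝ) + 2) = 1 / (((k : ℝ) + 1) * (k + 2)) := by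
      field_simp; ring
    have h3 : 1 / (((k : ℝ) + 1) * (k + 2)) ≤ (A + 1) / ((k : ℝ) + 1) ^ 2 := by
      apply div_le_div₀ <;> nlinarith
    rw [mul_one_div]; linarith
  constructor <;> linarith

lemma summable_u_one : Summable (fun k => u k 1) := by
  have : (fun k => u k 1) = fun _ => 0 := by
    funext k
    have : (1 : ℝ) + (k + 1) = k + 2 := by ring
    simp [u, this]
  rw [this]; exact summable_zero

lemma summable_u (x : ℝ) (hx : 0 < x) : Summable (fun k => u k x) := by
  refine summable_of_summable_hasDerivAt_of_isPreconnected (t := Set.Ioo 0 (x + 2))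
    (g := u) (g' := u1) (y₀ := 1)
    ((summable_q 0).mul_left (x + 2 + 1)) isOpen_Ioo isPreconnected_Ioo
    (fun k y hy => u_deriv k y hy.1) (fun k y hy => u1_bound _ k y hy) ?_ summable_u_one ?_
  · constructor <;> linarith
  · constructor <;> linarith

lemma tsum_u_deriv (x : ℝ) (hx : 0 < x) :
    HasDerivAt (fun y => ∑' k, u k y) (∑' k, u1 k x) x := by
  refine hasDerivAt_tsum_of_isPreconnected (t := Set.Ioo 0 (x + 2))
    (g := u) (g' := u1) (y₀ := 1)
    ((summable_q 0).mul_left (x + 2 + 1)) isOpen_Ioo isPreconnected_Ioo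
    (fun k y hy => u_deriv k y hy.1) (fun k y hy => u1_bound _ k y hy) ?_ summable_u_one ?_
  · constructor <;> linarith
  · constructor <;> linarith

lemma tsum_u1_deriv (x : ℝ) (hx : 0 < x) :
    HasDerivAt (fun y => ∑' k, u1 k y) (∑' k : ℕ, q 1 (x + (k + 1))) x := by
  refine hasDerivAt_tsum_of_isPreconnected (t := Set.Ioi 0)
    (g := u1) (g' := fun k x => q 1 (x + (k + 1))) (y₀ := x)
    (summable_q 0) isOpen_Ioi isPreconnected_Ioi
    (fun k y hy => u1_deriv k y hy) (fun k y hy => q_norm_le _ _ _ hy) hx ?_ hx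
  refine Summable.of_norm_bounded ((summable_q 0).mul_left (x + 2 + 1))
    (fun k => u1_bound (x + 2) k x ⟨hx, by linarith⟩)

lemma tsum_q_deriv (m : ℕ) (x : ℝ) (hx : 0 < x) :
    HasDerivAt (fun y => ∑' k : ℕ, q (m + 1) (y + (k + 1)))
      (-∑' k : ℕ, q (m + 2) (x + (k + 1))) x := by
  rw [← tsum_neg]
  refine hasDerivAt_tsum_of_isPreconnected (t := Set.Ioi 0)
    (g := fun (k : ℕ) x => q (m + 1) (x + (k + 1))) (g' := fun (k : ℕ) x => -q (m + 2) (x + (k + 1))) (y₀ := x)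
    (summable_q (m + 1)) isOpen_Ioi isPreconnected_Ioi
    (fun k y hy => q_deriv (m + 1) y (k + 1) (by have : 0 < y := hy; positivity))
    (fun k y hy => by rw [norm_neg]; exact q_norm_le _ _ _ hy) hx (summable_q_x m x hx) hx

lemma log_Gamma_eq (x : ℝ) (hx : 0 < x) :
    Real.log (Real.Gamma x) + Real.log x = ∑' k, u k x := by
  have h1 := (summable_u x hx).hasSum.tendsto_sum_nat
  have h2 : Tendsto (fun n : ℕ => Real.BohrMollerup.logGammaSeq x n + Real.log x
      + x * (Real.log (n + 1) - Real.log n)) atTop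
      (𝓝 (Real.log (Real.Gamma x) + Real.log x + x * 0)) :=
    ((Real.BohrMollerup.tendsto_log_gamma hx).add_const _).add
      (Real.tendsto_log_nat_add_one_sub_log.const_mul x)
  rw [mul_zero, add_zero] at h2
  refine tendsto_nhds_unique h2 (h1.congr ?_)
  intro n
  have : ∀ n : ℕ, ∑ i ∈ Finset.range n, u i x = x * Real.log (n + 1) + Real.log n.factorial
      - ∑ m ∈ Finset.range (n + 1), Real.log (x + m) + Real.log x := by
    intro n
    induction n with
    | zero => simp
    | succ n ih =>
      rw [Finset.sum_range_succ, ih, Finset.sum_range_succ _ (n + 1), Nat.factorial_succ]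
      push_cast
      rw [Real.log_mul (by positivity) (by positivity), u]
      have : (n : ℝ) + 1 + 1 = n + 2 := by ring
      rw [this]; ring
  rw [this, Real.BohrMollerup.logGammaSeq]
  ring

/-- the shifted trigamma-type series -/
noncomputable def T (m : ℕ) (x : ℝ) : ℝ := ∑' k : ℕ, q (m + 1) (x + (k + 1))

/-- the sequence of derivatives of `G` -/
noncomputable def F (lam : ℝ) : ℕ → ℝ → ℝ
  | 0, x => G lam x
  | 1, x => (∑' k, u1 k x) + 1 - (1 / 12) * q 2 (x + 1) - (lam - 48) / 48 * q 1 (x + 1)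
      + (1 / 24) * (-lam * (Real.log (x + 0) + 1)
        + ((9 * lam - 172) * Real.log (x + 1) + ((9 * lam - 172) + (3 * lam - 84) * q 0 (x + 1)))
        + (4 * (37 - 2 * lam) * Real.log (x + 2)
          + (4 * (37 - 2 * lam) + (4 * lam - 52) * q 0 (x + 2))))
  | (m + 2), x => (-1) ^ m * (T m x + P m x + (-lam / 24) * K m x)

lemma log_deriv_q (x a : ℝ) (h : 0 < x + a) :
    HasDerivAt (fun y => Real.log (y + a)) (q 0 (x + a)) x := by
  have := ((hasDerivAt_id x).add_const a).log h.ne'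
  refine this.congr_deriv ?_
  simp [q]

lemma G_eq (lam x : ℝ) (hx : 0 < x) : G lam x = (∑' k, u k x) + x + (1 / 12) * q 1 (x + 1)
    + (lam - 48) / 48 * q 0 (x + 1) + (1 / 24) * (-lam * x * Real.log (x + 0)
      + ((9 * lam - 172) * x + (12 * lam - 256)) * Real.log (x + 1)
      + (4 * (37 - 2 * lam) * x + 4 * (-3 * lam + 61)) * Real.log (x + 2)) := by
  rw [← log_Gamma_eq x hx]
  simp only [G, H, q, add_zero]
  have h1 : (1 : ℝ) + x = x + 1 := by ring
  rw [h1]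
  simp
  field_simp
  ring

lemma F0_deriv (lam x : ℝ) (hx : 0 < x) : HasDerivAt (F lam 0) (F lam 1 x) x := by
  have lin (a b : ℝ) : HasDerivAt (fun y : ℝ => a * y + b) a x := by
    simpa using ((hasDerivAt_id x).const_mul a).add_const b
  have lin0 (a : ℝ) : HasDerivAt (fun y : ℝ => a * y) a x := by
    simpa using ((hasDerivAt_id x).const_mul a)
  have h := ((((tsum_u_deriv x hx).add (hasDerivAt_id x)).add
    ((q_deriv 1 x 1 (by positivity)).const_mul (1 / 12))).add
    ((q_deriv 0 x 1 (by positivity)).const_mul ((lam - 48) / 48))).add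
    (((((lin0 (-lam)).mul (log_deriv_q x 0 (by linarith))).add
      ((lin (9 * lam - 172) (12 * lam - 256)).mul (log_deriv_q x 1 (by linarith)))).add
      ((lin (4 * (37 - 2 * lam)) (4 * (-3 * lam + 61))).mul
        (log_deriv_q x 2 (by linarith)))).const_mul (1 / 24))
  have h2 : HasDerivAt (F lam 0) _ x := h.congr_of_eventuallyEq (by
    filter_upwards [Ioi_mem_nhds hx] with y hy
    have := G_eq lam y hy
    simpa [F] using this)
  refine h2.congr_deriv ?_
  simp only [F, q]
  simp
  field_simp
  ring

lemma F1_deriv (lam x : ℝ) (hx : 0 < x) : HasDerivAt (F lam 1) (F lam 2 x) x := by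
  have h := ((((tsum_u1_deriv x hx).add_const 1).sub
    ((q_deriv 2 x 1 (by positivity)).const_mul (1 / 12))).sub
    ((q_deriv 1 x 1 (by positivity)).const_mul ((lam - 48) / 48))).add
    ((((((log_deriv_q x 0 (by linarith)).add_const 1).const_mul (-lam)).add
      (((log_deriv_q x 1 (by linarith)).const_mul (9 * lam - 172)).add
        (((q_deriv 0 x 1 (by positivity)).const_mul (3 * lam - 84)).const_add (9 * lam - 172)))).add
      (((log_deriv_q x 2 (by linarith)).const_mul (4 * (37 - 2 * lam))).add
        (((q_deriv 0 x 2 (by positivity)).const_mul (4 * lam - 52)).const_add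
          (4 * (37 - 2 * lam))))).const_mul (1 / 24))
  have h2 : HasDerivAt (F lam 1) _ x := h
  refine h2.congr_deriv ?_
  simp only [F, T, P, K]
  norm_num
  ring

lemma K_deriv (m : ℕ) (x : ℝ) (hx : 0 < x) : HasDerivAt (K m) (-K (m + 1) x) x := by
  have h0 (p : ℕ) := q_deriv p x 0 (by linarith)
  have h1 (p : ℕ) := q_deriv p x 1 (by linarith)
  have h2 (p : ℕ) := q_deriv p x 2 (by linarith)
  have := (((((h0 m).add ((h1 m).const_mul (-9))).add ((h1 (m+1)).const_mul 3)).add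
    ((h2 m).const_mul 8)).add ((h2 (m+1)).const_mul 4)).add ((h1 (m+2)).const_mul (-1/2))
  have h3 : HasDerivAt (K m) _ x := this
  refine h3.congr_deriv ?_
  unfold K; ring_nf

lemma P_deriv (m : ℕ) (x : ℝ) (hx : 0 < x) : HasDerivAt (P m) (-P (m + 1) x) x := by
  have h1 (p : ℕ) := q_deriv p x 1 (by linarith)
  have h2 (p : ℕ) := q_deriv p x 2 (by linarith)
  have := ((((((h1 (m+3)).const_mul (1/12)).add ((h1 (m+2)).const_mul (-1))).add
    ((h1 m).const_mul (-43/6))).add ((h1 (m+1)).const_mul (7/2))).add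
    ((h2 m).const_mul (37/6))).add ((h2 (m+1)).const_mul (13/6))
  have h3 : HasDerivAt (P m) _ x := this
  refine h3.congr_deriv ?_
  unfold P; ring_nf

lemma F_deriv (lam : ℝ) (n : ℕ) (x : ℝ) (hx : 0 < x) :
    HasDerivAt (F lam n) (F lam (n + 1) x) x := by
  match n with
  | 0 => exact F0_deriv lam x hx
  | 1 => exact F1_deriv lam x hx
  | m + 2 =>
    have := (((tsum_q_deriv m x hx).add (P_deriv m x hx)).add
      ((K_deriv m x hx).const_mul (-lam / 24))).const_mul ((-1) ^ m)
    have h2 : HasDerivAt (F lam (m + 2)) _ x := this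
    refine h2.congr_deriv ?_
    simp only [F, T]
    ring

lemma iter_eq (lam : ℝ) (n : ℕ) : ∀ x ∈ Set.Ioi (0:ℝ),
    iteratedDerivWithin n (G lam) (Set.Ioi 0) x = F lam n x := by
  induction n with
  | zero => intro x _; simp [F]
  | succ n ih =>
    intro x hx
    rw [iteratedDerivWithin_succ, derivWithin_congr ih (ih x hx)]
    exact (F_deriv lam n x hx).hasDerivWithinAt.derivWithin (uniqueDiffOn_Ioi 0 x hx)

lemma G_smooth (lam : ℝ) : ContDiffOn ℝ (⊤ : ℕ∞) (G lam) (Set.Ioi 0) := by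
  apply contDiffOn_of_differentiableOn_deriv
  intro m _
  refine DifferentiableOn.congr (f := F lam m) ?_ (iter_eq lam m)
  intro x hx
  exact (F_deriv lam m x hx).differentiableAt.differentiableWithinAt

lemma T_succ (m : ℕ) (x : ℝ) (hx : 0 < x) : T m x = q (m + 1) (x + 1) + T m (x + 1) := by
  unfold T
  rw [(summable_q_x m x hx).tsum_eq_zero_add]
  simp
  congr 1
  funext k
  ring_nf

lemma T_nat_tendsto (m : ℕ) (x : ℝ) :
    Tendsto (fun n : ℕ => T m (x + n)) atTop (𝓝 0) := by
  have := tendsto_sum_nat_add (fun k : ℕ => q (m + 1) (x + (k + 1)))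
  refine this.congr ?_
  intro n
  unfold T
  congr 1
  funext k
  push_cast
  ring_nf

lemma q_nat_tendsto (m : ℕ) (x a : ℝ) :
    Tendsto (fun n : ℕ => q m (x + n + a)) atTop (𝓝 0) := by
  unfold q
  have h1 : Tendsto (fun n : ℕ => x + n + a) atTop atTop :=
    tendsto_atTop_add_const_right _ _ (tendsto_atTop_add_const_left _ _ tendsto_natCast_atTop_atTop)
  have h2 := (tendsto_pow_atTop (n := m + 1) (by omega)).comp h1
  exact h2.const_div_atTop _

lemma P_nat_tendsto (m : ℕ) (x : ℝ) :
    Tendsto (fun n : ℕ => P m (x + n)) atTop (𝓝 0) := by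
  have h1 (p : ℕ) := q_nat_tendsto p x 1
  have h2 (p : ℕ) := q_nat_tendsto p x 2
  have := ((((((h1 (m+3)).const_mul (1/12)).add ((h1 (m+2)).const_mul (-1))).add
    ((h1 m).const_mul (-43/6))).add ((h1 (m+1)).const_mul (7/2))).add
    ((h2 m).const_mul (37/6))).add ((h2 (m+1)).const_mul (13/6))
  unfold P
  simpa using this

lemma TP_nonneg (m : ℕ) (x : ℝ) (hx : 0 < x) : 0 ≤ T m x + P m x := by
  have anti : Antitone (fun n : ℕ => T m (x + n) + P m (x + n)) := by
    apply antitone_nat_of_succ_le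
    intro n
    have hp : 0 < x + n := by positivity
    have a := T_succ m (x + n) hp
    have b := P_diff_nonneg m (x + n) hp
    push_cast
    rw [← add_assoc x n 1]
    linarith
  have lim := (T_nat_tendsto m x).add (P_nat_tendsto m x)
  have := anti.le_of_tendsto lim 0
  simpa using this

lemma F_ge_two (lam : ℝ) (hl : lam ≤ 0) (m : ℕ) (x : ℝ) (hx : 0 < x) :
    0 ≤ (-1 : ℝ) ^ (m + 2) * F lam (m + 2) x := by
  have h1 := TP_nonneg m x hx
  have h2 := K_nonneg m x hx
  have h3 : 0 ≤ (-lam / 24) * K m x := mul_nonneg (by linarith) h2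
  simp only [F]
  rw [← mul_assoc, ← pow_add, Even.neg_one_pow ⟨m + 1, by ring⟩, one_mul]
  linarith

lemma G_nat_tendsto (lam : ℝ) : Tendsto (fun n : ℕ => G lam n) atTop
    (𝓝 (Real.log (√Real.pi) + Real.log 2 / 2 + (124 - 7 * lam) / 24)) := by
  have h1 : Tendsto (fun n : ℕ => Real.log (Stirling.stirlingSeq n)) atTop
      (𝓝 (Real.log (√Real.pi))) :=
    (Stirling.tendsto_stirlingSeq_sqrt_pi).log (by positivity)
  have hd (d : ℝ) : Tendsto (fun n : ℕ => (n : ℝ) * Real.log (1 + d / n)) atTop (𝓝 d) :=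
    (Real.tendsto_mul_log_one_add_div_atTop d).comp tendsto_natCast_atTop_atTop
  have hz (d : ℝ) : Tendsto (fun n : ℕ => Real.log (1 + d / (n : ℝ))) atTop (𝓝 0) := by
    have : Tendsto (fun n : ℕ => 1 + d / (n : ℝ)) atTop (𝓝 (1 + 0)) :=
      (tendsto_const_div_atTop_nhds_zero_nat d).const_add 1
    simpa using this.log (by norm_num)
  have hq (p : ℕ) : Tendsto (fun n : ℕ => q p ((n : ℝ) + 1)) atTop (𝓝 0) := by
    simpa using q_nat_tendsto p 0 1
  have tot := (((h1.add_const (Real.log 2 / 2)).add ((hq 1).const_mul (1 / 12))).add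
    ((hq 0).const_mul ((lam - 48) / 48))).add
    (((((hd 1).const_mul (9 * lam - 172)).add ((hz 1).const_mul (12 * lam - 256))).add
      (((hd 2).const_mul (4 * (37 - 2 * lam))).add
        ((hz 2).const_mul (4 * (-3 * lam + 61))))).const_mul (1 / 24))
  have e : Real.log (√Real.pi) + Real.log 2 / 2 + (124 - 7 * lam) / 24 =
    Real.log (√Real.pi) + Real.log 2 / 2 + 1 / 12 * 0 + (lam - 48) / 48 * 0 +
      1 / 24 * ((9 * lam - 172) * 1 + (12 * lam - 256) * 0 + (4 * (37 - 2 * lam) * 2 +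
        4 * (-3 * lam + 61) * 0)) := by ring
  rw [e]
  refine tot.congr' ?_
  filter_upwards [eventually_gt_atTop 0] with n hn
  have hn' : (0 : ℝ) < n := by exact_mod_cast hn
  rw [G_eq lam n hn', ← log_Gamma_eq _ hn', Stirling.log_stirlingSeq_formula]
  have g : Real.log (Real.Gamma n) + Real.log n = Real.log n.factorial := by
    rw [← Real.log_mul (Real.Gamma_pos_of_pos hn').ne' hn'.ne', mul_comm,
      ← Real.Gamma_add_one hn'.ne', Real.Gamma_nat_eq_factorial]
  have l (d : ℝ) (hd : 0 < d) : Real.log (1 + d / n) = Real.log (n + d) - Real.log n := by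
    rw [← Real.log_div (by positivity) (by positivity)]
    congr 1; field_simp
  rw [g, l 1 (by norm_num), l 2 (by norm_num), Real.log_mul (by norm_num) hn'.ne',
    Real.log_div hn'.ne' (by positivity), Real.log_exp, add_zero]
  ring

lemma F1_nonpos (lam : ℝ) (hl : lam ≤ 0) (a : ℝ) (ha : 0 < a) : F lam 1 a ≤ 0 := by
  by_contra hc
  push Not at hc
  have hmono : MonotoneOn (F lam 1) (Set.Ioi 0) := by
    apply monotoneOn_of_hasDerivWithinAt_nonneg (convex_Ioi 0) (f' := F lam 2)
    · intro x hx; exact (F_deriv lam 1 x hx).continuousAt.continuousWithinAt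
    · intro x hx; rw [interior_Ioi] at hx; exact (F_deriv lam 1 x hx).hasDerivWithinAt
    · intro x hx; rw [interior_Ioi] at hx; simpa using F_ge_two lam hl 0 x hx
  have hmono2 : MonotoneOn (fun x => F lam 0 x - F lam 1 a * x) (Set.Ici a) := by
    have hder (x : ℝ) (hx : a ≤ x) : HasDerivAt (fun x => F lam 0 x - F lam 1 a * x)
        (F lam 1 x - F lam 1 a) x := by
      have := (F_deriv lam 0 x (by linarith)).sub ((hasDerivAt_id x).const_mul (F lam 1 a))
      have h3 : HasDerivAt (fun x => F lam 0 x - F lam 1 a * x) _ x := this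
      refine h3.congr_deriv ?_
      simp
    apply monotoneOn_of_hasDerivWithinAt_nonneg (convex_Ici a)
      (f' := fun x => F lam 1 x - F lam 1 a)
    · intro x hx; exact (hder x hx).continuousAt.continuousWithinAt
    · intro x hx; exact (hder x (interior_subset hx)).hasDerivWithinAt
    · intro x hx
      have h : a ≤ x := interior_subset hx
      have := hmono (a := a) (b := x) ha (by simp; linarith) h
      linarith
  have hlow : ∀ᶠ n : ℕ in atTop, F lam 1 a * n + (G lam a - F lam 1 a * a) ≤ G lam n := by
    obtain ⟨N, hN⟩ := exists_nat_ge a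
    filter_upwards [eventually_ge_atTop N] with n hn
    have h : a ≤ n := hN.trans (by exact_mod_cast hn)
    have := hmono2 (a := a) (b := n) (by simp) h h
    simp only [F] at this ⊢
    linarith
  have hinf : Tendsto (fun n : ℕ => F lam 1 a * n + (G lam a - F lam 1 a * a)) atTop atTop :=
    tendsto_atTop_add_const_right _ _ (tendsto_natCast_atTop_atTop.const_mul_atTop hc)
  exact not_tendsto_nhds_of_tendsto_atTop (tendsto_atTop_mono' _ hlow hinf) _ (G_nat_tendsto lam)

lemma F0_nonneg (lam : ℝ) (hl : lam ≤ 0) (a : ℝ) (ha : 0 < a) : 0 ≤ F lam 0 a := by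
  have anti : AntitoneOn (F lam 0) (Set.Ioi 0) := by
    apply antitoneOn_of_hasDerivWithinAt_nonpos (convex_Ioi 0) (f' := F lam 1)
    · intro x hx; exact (F_deriv lam 0 x hx).continuousAt.continuousWithinAt
    · intro x hx; rw [interior_Ioi] at hx; exact (F_deriv lam 0 x hx).hasDerivWithinAt
    · intro x hx; rw [interior_Ioi] at hx; exact F1_nonpos lam hl x hx
  have h1 : Real.log (√Real.pi) + Real.log 2 / 2 + (124 - 7 * lam) / 24 ≤ F lam 0 a := by
    refine le_of_tendsto (G_nat_tendsto lam) ?_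
    obtain ⟨N, hN⟩ := exists_nat_ge a
    filter_upwards [eventually_ge_atTop N] with n hn
    have h : a ≤ n := hN.trans (by exact_mod_cast hn)
    exact anti (a := a) (b := n) ha (lt_of_lt_of_le ha h) h
  have h2 : 0 ≤ Real.log (√Real.pi) := by
    apply Real.log_nonneg
    rw [Real.one_le_sqrt]
    linarith [Real.pi_gt_three]
  have h3 : 0 ≤ Real.log 2 := Real.log_nonneg (by norm_num)
  linarith

lemma necessity (lam : ℝ) (h : ∀ x, 0 < x → 0 ≤ F lam 2 x) : lam ≤ 0 := by
  by_contra hc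
  push Not at hc
  set C : ℝ := ∑' k : ℕ, q 1 ((k : ℝ) + 1) with hC
  have hC0 : 0 ≤ C := tsum_nonneg (fun k => q_nonneg _ _ (by positivity))
  set M : ℝ := 10 + 24 * (C + 11) / lam with hM
  have hM1 : 10 < M := by
    have : 0 < 24 * (C + 11) / lam := by positivity
    linarith
  have hx : 0 < 1 / M := by positivity
  set x := 1 / M with hxd
  have h2 := h x hx
  have hT : T 0 x ≤ C := by
    refine (summable_q_x 0 x hx).tsum_le_tsum (fun k => ?_) (summable_q 0)
    exact q_anti _ _ _ (by positivity) (by linarith)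
  have q1 (p : ℕ) : q p (x + 1) ≤ q p 1 := q_anti _ _ _ (by norm_num) (by linarith)
  have q2 (p : ℕ) : q p (x + 2) ≤ q p 2 := q_anti _ _ _ (by norm_num) (by linarith)
  have n1 (p : ℕ) : 0 ≤ q p (x + 1) := q_nonneg _ _ (by linarith)
  have n2 (p : ℕ) : 0 ≤ q p (x + 2) := q_nonneg _ _ (by linarith)
  have v0 : q 0 1 = 1 := by simp [q]
  have v1 : q 1 1 = 1 := by simp [q]
  have v2 : q 2 1 = 2 := by simp [q]
  have v3 : q 3 1 = 6 := by simp [q, Nat.factorial]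
  have w0 : q 0 2 = 1 / 2 := by simp [q]
  have w1 : q 1 2 = 1 / 4 := by simp [q]; norm_num
  have hP : P 0 x ≤ 10 := by
    simp only [P]
    linarith [q1 3, q1 1, q2 0, q2 1, n1 2, n1 0]
  have e : q 0 (x + 0) = M := by simp [q, hxd]
  have hK : M - 10 ≤ K 0 x := by
    simp only [K]
    linarith [q1 0, n1 1, n2 0, n2 1, q1 2]
  have hk2 : lam / 24 * (M - 10) ≤ lam / 24 * K 0 x := mul_le_mul_of_nonneg_left hK (by positivity)
  have e2 : lam / 24 * (M - 10) = C + 11 := by rw [hM]; field_simp; ring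
  simp only [F, pow_zero, one_mul] at h2
  linarith

theorem stmt_8 (lam : ℝ) :
    CompletelyMonotonicOn (G lam) (Set.Ioi 0) ↔ lam ≤ 0 := by
  constructor
  · intro h
    apply necessity
    intro x hx
    have := h.2 2 x hx
    rw [iter_eq lam 2 x hx] at this
    simpa using this
  · intro hl
    refine ⟨G_smooth lam, ?_⟩
    intro n x hx
    rw [iter_eq lam n x hx]
    match n with
    | 0 => simpa using F0_nonneg lam hl x hx
    | 1 => simpa using F1_nonpos lam hl x hx
    | m + 2 => exact F_ge_two lam hl m x hx
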